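/- arXiv:1506.08028 — 12 statements merged into one kernel-verified Lean document; each statement's English description precedes it below -/
import Mathlib

section
/- For every real number N and all real x, y, z, w with z ≠ 0, w ≠ 0, z + w ≠ 0, yz + 1 > 0 and y(z+w) + 1 > 0, the canonical solution φ_N(x,y) = (x·(y+1)^{N−1}, y/(y+1)) satisfies the projective translation equation: (1/(z+w))·φ_N(x(z+w), y(z+w)) = (1/w)·φ_N(φ_N(xz, yz)·(w/z)). Concretely, writing (u,v) = (xz·(yz+1)^{N−1}, yz/(yz+1)), one has (1/w)·(u(w/z))·((v(w/z))+1)^{N−1} = x·(y(z+w)+1)^{N−1} and (1/w)·(v(w/z))/((v(w/z))+1) = y/(y(z+w)+1). -/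
/-- The canonical solution `φ_N(x,y) = (x(y+1)^{N-1}, y/(y+1))` satisfies
the projective translation equation
`(1/(z+w))·φ_N(x(z+w), y(z+w)) = (1/w)·φ_N(φ_N(xz, yz)·(w/z))`. -/
theorem canonical_solution_satisfies_PrTE (N x y z w : ℝ)
    (hz : z ≠ 0) (hw : w ≠ 0) (hzw : z + w ≠ 0)
    (h1 : y * z + 1 > 0) (h2 : y * (z + w) + 1 > 0) :
    (1 / w) * ((x * z * (y * z + 1) ^ (N - 1)) * (w / z)) *
        (((y * z / (y * z + 1)) * (w / z)) + 1) ^ (N - 1)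
      = x * (y * (z + w) + 1) ^ (N - 1) ∧
    (1 / w) * (((y * z / (y * z + 1)) * (w / z)) /
        (((y * z / (y * z + 1)) * (w / z)) + 1))
      = y / (y * (z + w) + 1) := by
  have h1' : y * z + 1 ≠ 0 := h1.ne'
  have h2' : y * (z + w) + 1 ≠ 0 := h2.ne'
  have e : (y * z / (y * z + 1)) * (w / z) + 1
      = (y * (z + w) + 1) / (y * z + 1) := by
    rw [div_mul_div_comm, div_add_one (mul_ne_zero h1' hz),
      div_eq_div_iff (mul_ne_zero h1' hz) h1']
    ring
  have e2 : (y * z / (y * z + 1)) * (w / z) = y * w / (y * z + 1) := by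
    rw [div_mul_div_comm, div_eq_div_iff (mul_ne_zero h1' hz) h1']
    ring
  rw [e, e2]
  constructor
  · rw [Real.div_rpow h2.le h1.le]
    have h3 : (y * z + 1) ^ (N - 1) ≠ 0 := (Real.rpow_pos_of_pos h1 _).ne'
    generalize (y * z + 1) ^ (N - 1) = A at *
    generalize (y * (z + w) + 1) ^ (N - 1) = B at *
    field_simp
  · rw [div_div_div_cancel_right₀ h1', div_mul_div_comm, one_mul,
      mul_comm y w, mul_div_mul_left _ _ hw]
end

section
/- Let U(x,y) = (y·√(4x+(y−1)²) + y² + 2x − y)/(8x + 2(y−1)²) and V(x,y) = y/√(4x+(y−1)²), defined for real x, y with 4x + (y−1)² > 0. Then (U, V) satisfies the projective flow PDE for the vector field ϖ(x,y) = −4x² + 3xy, ϱ(x,y) = −2xy + y²: that is, U_x·(−4x² + 3xy − x) + U_y·(−2xy + y² − y) + U = 0 and V_x·(−4x² + 3xy − x) + V_y·(−2xy + y² − y) + V = 0 at every such point. -/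
/-- The first coordinate of the algebraic flow `Φ` with vector field `(-4x²+3xy) • (-2xy+y²)`. -/
noncomputable def Ualg (x y : ℝ) : ℝ :=
  (y * Real.sqrt (4 * x + (y - 1) ^ 2) + y ^ 2 + 2 * x - y) / (8 * x + 2 * (y - 1) ^ 2)

/-- The second coordinate of the algebraic flow `Φ` with vector field `(-4x²+3xy) • (-2xy+y²)`. -/
noncomputable def Valg (x y : ℝ) : ℝ :=
  y / Real.sqrt (4 * x + (y - 1) ^ 2)

/-- `(U,V)` satisfies the projective flow PDE for the vector field
`ϖ(x,y) = -4x² + 3xy`, `ϱ(x,y) = -2xy + y²`. -/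
theorem alg_flow_satisfies_PDE (x y : ℝ) (h : 4 * x + (y - 1) ^ 2 > 0) :
    deriv (fun t => Ualg t y) x * (-4 * x ^ 2 + 3 * x * y - x) +
      deriv (fun t => Ualg x t) y * (-2 * x * y + y ^ 2 - y) + Ualg x y = 0 ∧
    deriv (fun t => Valg t y) x * (-4 * x ^ 2 + 3 * x * y - x) +
      deriv (fun t => Valg x t) y * (-2 * x * y + y ^ 2 - y) + Valg x y = 0 := by
  obtain ⟨s, hs⟩ : ∃ s, s = Real.sqrt (4 * x + (y - 1) ^ 2) := ⟨_, rfl⟩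
  have hs0 : 0 < s := hs ▸ Real.sqrt_pos.2 h
  have hss : s ^ 2 = 4 * x + (y - 1) ^ 2 := by rw [hs, Real.sq_sqrt h.le]
  have hne : s ≠ 0 := hs0.ne'
  have hx : x = (s ^ 2 - (y - 1) ^ 2) / 4 := by linarith
  have hD : 8 * x + 2 * (y - 1) ^ 2 = 2 * s ^ 2 := by linarith
  have hD0 : 8 * x + 2 * (y - 1) ^ 2 ≠ 0 := by rw [hD]; positivity
  have a1 : HasDerivAt (fun t : ℝ => 4 * t + (y - 1) ^ 2) 4 x := by
    simpa using ((hasDerivAt_id x).const_mul 4).add_const ((y - 1) ^ 2)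
  have a2 : HasDerivAt (fun t : ℝ => 4 * x + (t - 1) ^ 2) (2 * (y - 1)) y := by
    simpa using (((hasDerivAt_id y).sub_const 1).pow 2).const_add (4 * x)
  have b1 := a1.sqrt h.ne'
  have b2 := a2.sqrt h.ne'
  have d1 : HasDerivAt (fun t : ℝ => 8 * t + 2 * (y - 1) ^ 2) 8 x := by
    simpa using ((hasDerivAt_id x).const_mul 8).add_const (2 * (y - 1) ^ 2)
  have d2 : HasDerivAt (fun t : ℝ => 8 * x + 2 * (t - 1) ^ 2) (2 * (2 * (y - 1))) y := by
    simpa using ((((hasDerivAt_id y).sub_const 1).pow 2).const_mul 2).const_add (8 * x)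
  have hsq : Real.sqrt (4 * x + (y - 1) ^ 2) ≠ 0 := hs ▸ hne
  have v1 := (hasDerivAt_const x y).fun_div b1 hsq
  have v2 := (hasDerivAt_id' y).fun_div b2 hsq
  have u1 := ((((b1.const_mul y).fun_add (hasDerivAt_const x (y ^ 2))).fun_add
    ((hasDerivAt_id' x).const_mul 2)).fun_sub (hasDerivAt_const x y)).fun_div d1 hD0
  have u2 := (((((hasDerivAt_id' y).fun_mul b2).fun_add ((hasDerivAt_id' y).fun_pow 2)).fun_add
    (hasDerivAt_const y (2 * x))).fun_sub (hasDerivAt_id' y)).fun_div d2 hD0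
  simp only [Ualg, Valg]
  rw [u1.deriv, u2.deriv, v1.deriv, v2.deriv]
  rw [← hs, hD]
  clear u1 u2 v1 v2 d1 d2 b1 b2 a1 a2 hsq hD0 hD hs h
  subst hx
  constructor
  · field_simp
    push_cast
    ring
  · field_simp
    ring
end

section
/- Let U(x,y) = (y·√(4x+(y−1)²) + y² + 2x − y)/(8x + 2(y−1)²) and V(x,y) = y/√(4x+(y−1)²), defined for real x, y with 4x + (y−1)² > 0. Then the orbit conservation identity x·(x−y)·V(x,y)⁴ = y⁴·U(x,y)·(U(x,y) − V(x,y)) holds at every such point; equivalently, U^{−1}(U−V)^{−1}V⁴ = x^{−1}(x−y)^{−1}y⁴ wherever both sides are defined. -/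
/-- The orbit conservation identity
`x(x-y)·V⁴ = y⁴·U·(U-V)`, i.e. `U⁻¹(U-V)⁻¹V⁴ = x⁻¹(x-y)⁻¹y⁴` wherever defined. -/
theorem alg_flow_orbit_conservation (x y : ℝ) (h : 4 * x + (y - 1) ^ 2 > 0) :
    x * (x - y) * (Valg x y) ^ 4 = y ^ 4 * Ualg x y * (Ualg x y - Valg x y) := by
  have hs : 0 < Real.sqrt (4 * x + (y - 1) ^ 2) := Real.sqrt_pos.mpr h
  have h2 : Real.sqrt (4 * x + (y - 1) ^ 2) ^ 2 = 4 * x + (y - 1) ^ 2 := Real.sq_sqrt h.le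
  unfold Ualg Valg
  generalize Real.sqrt (4 * x + (y - 1) ^ 2) = s at hs h2
  have hne : s ≠ 0 := hs.ne'
  have hd : 8 * x + 2 * (y - 1) ^ 2 = 2 * s ^ 2 := by rw [h2]; ring
  have hx : x = (s ^ 2 - (y - 1) ^ 2) / 4 := by rw [h2]; ring
  rw [hd, hx]
  field_simp
  ring
end

section
/- Let W(x,y) = exp(−x/y − x²/(2y²))·y, defined for real x, y with y ≠ 0. Then (x² + xy + y²)·W_x(x,y) + (xy + y²)·W_y(x,y) = 0 at every such point; that is, W is a first integral of the vector field (x²+xy+y²) • (xy+y²), so the orbits of the corresponding flow Ξ are the transcendental curves exp(−x/y − x²/(2y²))·y = const. -/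
/-- `W(x,y) = exp(-x/y - x²/(2y²))·y` is a first integral of the vector field
`(x²+xy+y²) • (xy+y²)`: `(x²+xy+y²)·W_x + (xy+y²)·W_y = 0` for `y ≠ 0`. -/
theorem first_integral_integral_flow (x y : ℝ) (hy : y ≠ 0) :
    (x ^ 2 + x * y + y ^ 2) *
        deriv (fun t => Real.exp (-t / y - t ^ 2 / (2 * y ^ 2)) * y) x +
      (x * y + y ^ 2) *
        deriv (fun t => Real.exp (-x / t - x ^ 2 / (2 * t ^ 2)) * t) y = 0 := by
  have h1 : HasDerivAt (fun t : ℝ => Real.exp (-t / y - t ^ 2 / (2 * y ^ 2)) * y)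
      (Real.exp (-x / y - x ^ 2 / (2 * y ^ 2)) * (-1 / y - (2 * x) / (2 * y ^ 2)) * y) x := by
    have ha : HasDerivAt (fun t : ℝ => -t / y) (-1 / y) x := (hasDerivAt_id x).neg.div_const y
    have hb : HasDerivAt (fun t : ℝ => t ^ 2 / (2 * y ^ 2)) ((2 * x) / (2 * y ^ 2)) x := by
      simpa using (hasDerivAt_pow 2 x).div_const (2 * y ^ 2)
    exact (ha.sub hb).exp.mul_const y
  have h2 : HasDerivAt (fun t : ℝ => Real.exp (-x / t - x ^ 2 / (2 * t ^ 2)) * t)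
      (Real.exp (-x / y - x ^ 2 / (2 * y ^ 2)) *
        ((0 * y - -x * 1) / y ^ 2 -
          (0 * (2 * y ^ 2) - x ^ 2 * (2 * (2 * y))) / (2 * y ^ 2) ^ 2) * y +
        Real.exp (-x / y - x ^ 2 / (2 * y ^ 2)) * 1) y := by
    have ha : HasDerivAt (fun t : ℝ => -x / t) ((0 * y - -x * 1) / y ^ 2) y :=
      (hasDerivAt_const y (-x)).div (hasDerivAt_id y) hy
    have hc : HasDerivAt (fun t : ℝ => 2 * t ^ 2) (2 * (2 * y)) y := by
      simpa using (hasDerivAt_pow 2 y).const_mul 2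
    have hb : HasDerivAt (fun t : ℝ => x ^ 2 / (2 * t ^ 2))
        ((0 * (2 * y ^ 2) - x ^ 2 * (2 * (2 * y))) / (2 * y ^ 2) ^ 2) y :=
      (hasDerivAt_const y (x ^ 2)).div hc (by positivity)
    exact (ha.sub hb).exp.mul (hasDerivAt_id y)
  rw [h1.deriv, h2.deriv]
  generalize Real.exp (-x / y - x ^ 2 / (2 * y ^ 2)) = E
  field_simp
  ring
end

section
/- Let B, C be real numbers with C ≠ 1, and let ϖ'(x,y) = ((B−1)/(C−1))x² + Bxy and ϱ'(x,y) = ((B−1)/(C−1))Cxy + y². Let W(x,y) = x^{1−C}·(x−y)^{BC−1}·y^{1−B}, defined with real powers for x > y > 0. Then ϖ'(x,y)·W_x(x,y) + ϱ'(x,y)·W_y(x,y) = 0 at every such point; that is, the orbits of the flow with vector field ϖ' • ϱ' are the curves x^{1−C}(x−y)^{BC−1}y^{1−B} = const. -/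
/-- For `C ≠ 1`, the function `W(x,y) = x^{1-C}(x-y)^{BC-1}y^{1-B}` (real powers,
`x > y > 0`) is a first integral of the vector field
`ϖ'(x,y) = ((B-1)/(C-1))x² + Bxy`, `ϱ'(x,y) = ((B-1)/(C-1))Cxy + y²`. -/
theorem orbits_of_general_quadratic_vector_field (B C : ℝ) (hC : C ≠ 1)
    (x y : ℝ) (hxy : x > y) (hy : y > 0) :
    ((B - 1) / (C - 1) * x ^ 2 + B * x * y) *
        deriv (fun t => t ^ (1 - C) * (t - y) ^ (B * C - 1) * y ^ (1 - B)) x +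
      ((B - 1) / (C - 1) * C * x * y + y ^ 2) *
        deriv (fun t => x ^ (1 - C) * (x - t) ^ (B * C - 1) * t ^ (1 - B)) y = 0 := by
  have hx : 0 < x := lt_trans hy hxy
  have hd : 0 < x - y := sub_pos.mpr hxy
  have h1 : HasDerivAt (fun t : ℝ => t ^ (1 - C) * (t - y) ^ (B * C - 1) * y ^ (1 - B)) _ x :=
    (((hasDerivAt_id' x).rpow_const (p := 1 - C) (Or.inl hx.ne')).mul
      (((hasDerivAt_id' x).sub_const y).rpow_const (p := B * C - 1)
        (Or.inl hd.ne'))).mul_const (y ^ (1 - B))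
  have h2 : HasDerivAt (fun t : ℝ => x ^ (1 - C) * (x - t) ^ (B * C - 1) * t ^ (1 - B)) _ y :=
    ((((hasDerivAt_id' y).const_sub x).rpow_const (p := B * C - 1)
      (Or.inl hd.ne')).const_mul (x ^ (1 - C))).mul
      ((hasDerivAt_id' y).rpow_const (p := 1 - B) (Or.inl hy.ne'))
  rw [h1.deriv, h2.deriv, Real.rpow_sub_one hx.ne', Real.rpow_sub_one hd.ne' (B * C - 1),
    Real.rpow_sub_one hy.ne']
  generalize x ^ (1 - C) = P
  generalize (x - y) ^ (B * C - 1) = Q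
  generalize y ^ (1 - B) = R
  obtain ⟨k, hk⟩ : ∃ k, k = (B - 1) / (C - 1) := ⟨_, rfl⟩
  have hB : B = k * (C - 1) + 1 := by
    rw [hk, div_mul_cancel₀ _ (sub_ne_zero.mpr hC)]; ring
  rw [← hk, hB]
  have hx' := hx.ne'
  have hy' := hy.ne'
  have hd' := hd.ne'
  field_simp
  ring
end

section
/- Define Y(x) = (1/5)·∫₀¹ (1−t)^{−4/5}(1−xt)^{−3/5} dt for real x < 1 (real powers of positive reals). Then Y(0) = 1, Y is differentiable on (−∞, 1), and for every x < 1 one has 5x(1−x)·Y'(x) + (1−3x)·Y(x) = 1. -/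
open intervalIntegral

/-- The special hypergeometric function `Y(x) = ₂F₁(3/5, 1; 6/5; x)`, given as the integral
`Y(x) = (1/5)·∫₀¹ (1-t)^{-4/5}(1-xt)^{-3/5} dt`. -/
noncomputable def Yfun (x : ℝ) : ℝ :=
  (1 / 5) * ∫ t in (0 : ℝ)..1, (1 - t) ^ (-(4 : ℝ) / 5) * (1 - x * t) ^ (-(3 : ℝ) / 5)

lemma Yaux_pos {x t : ℝ} (hx : x < 1) (h0 : 0 ≤ t) (h1 : t ≤ 1) : 0 < 1 - x * t := by
  rcases le_or_gt x 0 with h | h <;> nlinarith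

lemma Yaux_int : IntervalIntegrable (fun t : ℝ => (1 - t) ^ (-(4 : ℝ) / 5))
    MeasureTheory.volume 0 1 := by
  have h := (intervalIntegrable_rpow' (a := 0) (b := 1) (r := -(4 : ℝ) / 5)
    (by norm_num)).comp_sub_left 1
  simpa using h.symm

lemma Yaux_cont {x : ℝ} (hx : x < 1) (r : ℝ) :
    ContinuousOn (fun t : ℝ => (1 - x * t) ^ r) (Set.uIcc 0 1) := by
  rw [Set.uIcc_of_le zero_le_one]
  apply ContinuousOn.rpow_const (by fun_prop)
  intro t ht
  exact Or.inl (Yaux_pos hx ht.1 ht.2).ne'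

lemma Yaux_main {x₀ : ℝ} (hx₀ : x₀ < 1) :
    ∃ D : ℝ, HasDerivAt Yfun D x₀ ∧ 5 * x₀ * (1 - x₀) * D + (1 - 3 * x₀) * Yfun x₀ = 1 := by
  set δ : ℝ := min 1 ((1 - x₀) / 2) with hδ
  have hδ0 : 0 < δ := lt_min one_pos (by linarith)
  have hδ1 : δ ≤ 1 := min_le_left _ _
  have hδ2 : δ ≤ (1 - x₀) / 2 := min_le_right _ _
  have hFint : IntervalIntegrable
      (fun t : ℝ => (1 - t) ^ (-(4 : ℝ) / 5) * (1 - x₀ * t) ^ (-(3 : ℝ) / 5))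
      MeasureTheory.volume 0 1 := Yaux_int.mul_continuousOn (Yaux_cont hx₀ _)
  have key := intervalIntegral.hasDerivAt_integral_of_dominated_loc_of_deriv_le
    (μ := MeasureTheory.volume) (a := (0 : ℝ)) (b := 1)
    (F := fun x t : ℝ => (1 - t) ^ (-(4 : ℝ) / 5) * (1 - x * t) ^ (-(3 : ℝ) / 5))
    (F' := fun x t : ℝ => (1 - t) ^ (-(4 : ℝ) / 5) *
      ((3 / 5) * t * (1 - x * t) ^ (-(8 : ℝ) / 5)))
    (x₀ := x₀) (s := Set.Iio ((1 + x₀) / 2))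
    (bound := fun t => (1 - t) ^ (-(4 : ℝ) / 5) * δ ^ (-(8 : ℝ) / 5))
    (Iio_mem_nhds (by linarith))
    (Filter.Eventually.of_forall fun x => by
      apply Measurable.aestronglyMeasurable
      fun_prop)
    hFint
    (by
      apply Measurable.aestronglyMeasurable
      fun_prop)
    (Filter.Eventually.of_forall fun t ht x hx => by
      rw [Set.uIoc_of_le zero_le_one] at ht
      obtain ⟨h0, h1⟩ := ht
      have hx' : x < (1 + x₀) / 2 := hx
      have hge : δ ≤ 1 - x * t := by
        rcases le_or_gt x 0 with h | h <;> nlinarith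
      have hpos : 0 < 1 - x * t := by linarith
      have e1 : 0 ≤ (1 - t) ^ (-(4 : ℝ) / 5) := Real.rpow_nonneg (by linarith) _
      have e2 : 0 ≤ (1 - x * t) ^ (-(8 : ℝ) / 5) := Real.rpow_nonneg hpos.le _
      have e3 : (1 - x * t) ^ (-(8 : ℝ) / 5) ≤ δ ^ (-(8 : ℝ) / 5) :=
        Real.rpow_le_rpow_of_nonpos hδ0 hge (by norm_num)
      rw [Real.norm_of_nonneg (by positivity)]
      apply mul_le_mul_of_nonneg_left _ e1
      nlinarith)
    (Yaux_int.mul_const _)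
    (Filter.Eventually.of_forall fun t ht x hx => by
      rw [Set.uIoc_of_le zero_le_one] at ht
      obtain ⟨h0, h1⟩ := ht
      have hx' : x < (1 + x₀) / 2 := hx
      have hpos : 0 < 1 - x * t := Yaux_pos (by linarith) h0.le h1
      have hd : HasDerivAt (fun x : ℝ => 1 - x * t) (-t) x := by
        simpa using ((hasDerivAt_id x).mul_const t).const_sub 1
      have := (hd.rpow_const (p := -(3 : ℝ) / 5) (Or.inl hpos.ne')).const_mul
        ((1 - t) ^ (-(4 : ℝ) / 5))
      refine this.congr_deriv ?_
      rw [show (-(3 : ℝ) / 5 - 1) = -(8 : ℝ) / 5 by norm_num]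
      ring)
  obtain ⟨hF'int, hder⟩ := key
  refine ⟨_, hder.const_mul (1 / 5), ?_⟩
  have ftc := intervalIntegral.integral_eq_sub_of_hasDerivAt_of_le (a := (0 : ℝ)) (b := 1)
    (f := fun t : ℝ => -5 * ((1 - t) ^ ((1 : ℝ) / 5) * (1 - x₀ * t) ^ (-(3 : ℝ) / 5)))
    (f' := fun t : ℝ => 5 * x₀ * (1 - x₀) * ((1 - t) ^ (-(4 : ℝ) / 5) *
        ((3 / 5) * t * (1 - x₀ * t) ^ (-(8 : ℝ) / 5))) +
      (1 - 3 * x₀) * ((1 - t) ^ (-(4 : ℝ) / 5) * (1 - x₀ * t) ^ (-(3 : ℝ) / 5)))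
    zero_le_one
    (by
      have := Yaux_cont hx₀ (-(3 : ℝ) / 5)
      rw [Set.uIcc_of_le zero_le_one] at this
      refine continuousOn_const.mul (ContinuousOn.mul ?_ this)
      exact ContinuousOn.rpow_const (by fun_prop) (fun _ _ => Or.inr (by norm_num)))
    (fun t ht => by
      have hpos : 0 < 1 - x₀ * t := Yaux_pos hx₀ ht.1.le ht.2.le
      have ht1 : 0 < 1 - t := by linarith [ht.2]
      have hd1 : HasDerivAt (fun t : ℝ => 1 - t) (-1) t := by
        simpa using (hasDerivAt_id t).const_sub 1
      have hd2 : HasDerivAt (fun t : ℝ => 1 - x₀ * t) (-x₀) t := by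
        simpa using ((hasDerivAt_id t).const_mul x₀).const_sub 1
      have := ((hd1.rpow_const (p := (1 : ℝ) / 5) (Or.inl ht1.ne')).mul
        (hd2.rpow_const (p := -(3 : ℝ) / 5) (Or.inl hpos.ne'))).const_mul (-5)
      refine this.congr_deriv ?_
      rw [show (-(3 : ℝ) / 5 - 1) = -(8 : ℝ) / 5 by norm_num,
        show ((1 : ℝ) / 5 - 1) = -(4 : ℝ) / 5 by norm_num]
      have r1 : (1 - x₀ * t) ^ (-(3 : ℝ) / 5) = (1 - x₀ * t) ^ (-(8 : ℝ) / 5) * (1 - x₀ * t) := by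
        rw [← Real.rpow_add_one hpos.ne']; norm_num
      have r2 : (1 - t) ^ ((1 : ℝ) / 5) = (1 - t) ^ (-(4 : ℝ) / 5) * (1 - t) := by
        rw [← Real.rpow_add_one ht1.ne']; norm_num
      rw [r1, r2]
      ring)
    ((hF'int.const_mul _).add (hFint.const_mul _))
  rw [intervalIntegral.integral_add (hF'int.const_mul _) (hFint.const_mul _),
    intervalIntegral.integral_const_mul, intervalIntegral.integral_const_mul] at ftc
  norm_num at ftc
  norm_num [Yfun]
  linarith

/-- `Y(0) = 1`, `Y` is differentiable on `(-∞, 1)`, and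
`5x(1-x)·Y'(x) + (1-3x)·Y(x) = 1` for every `x < 1`. -/
theorem Yfun_ODE :
    Yfun 0 = 1 ∧ (∀ x : ℝ, x < 1 → DifferentiableAt ℝ Yfun x) ∧
    ∀ x : ℝ, x < 1 → 5 * x * (1 - x) * deriv Yfun x + (1 - 3 * x) * Yfun x = 1 := by
  refine ⟨?_, fun x hx => ?_, fun x hx => ?_⟩
  · obtain ⟨D, -, h⟩ := Yaux_main (x₀ := 0) (by norm_num)
    simpa using h
  · obtain ⟨D, h, -⟩ := Yaux_main hx
    exact h.differentiableAt
  · obtain ⟨D, h, h'⟩ := Yaux_main hx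
    rw [h.deriv]
    exact h'
end

section
/- One has (1/5)·∫₁^∞ t^{−3/5}(t−1)^{−4/5} dt = (1/5)·B(1/5, 2/5) = Γ(1/5)·Γ(2/5)²·√(10+2√5)/(20π), where B denotes the Euler Beta function and Γ the Gamma function; in particular the improper integral converges. -/
open MeasureTheory

lemma aux_beta : IntegrableOn (fun x : ℝ => x ^ (-(3 : ℝ) / 5) * (1 - x) ^ (-(4 : ℝ) / 5)) (Set.Ioo 0 1) ∧
    ∫ x in Set.Ioo (0 : ℝ) 1, x ^ (-(3 : ℝ) / 5) * (1 - x) ^ (-(4 : ℝ) / 5)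
      = Real.Gamma (1 / 5) * Real.Gamma (2 / 5) / Real.Gamma (1 / 5 + 2 / 5) := by
  have hc := Complex.betaIntegral_convergent (u := ((2 / 5 : ℝ) : ℂ)) (v := ((1 / 5 : ℝ) : ℂ))
    (by rw [Complex.ofReal_re]; norm_num) (by rw [Complex.ofReal_re]; norm_num)
  rw [intervalIntegrable_iff_integrableOn_Ioo_of_le zero_le_one] at hc
  have hcongr : ∀ x ∈ Set.Ioo (0 : ℝ) 1,
      (x : ℂ) ^ (((2 / 5 : ℝ) : ℂ) - 1) * (1 - (x : ℂ)) ^ (((1 / 5 : ℝ) : ℂ) - 1)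
        = ((x ^ (-(3 : ℝ) / 5) * (1 - x) ^ (-(4 : ℝ) / 5) : ℝ) : ℂ) := by
    intro x hx
    rw [Complex.ofReal_mul, Complex.ofReal_cpow hx.1.le, Complex.ofReal_cpow (by linarith [hx.2])]
    push_cast
    norm_num
  have hc2 := hc.congr_fun hcongr measurableSet_Ioo
  constructor
  · exact hc2.re
  · have h := ProbabilityTheory.beta_eq_betaIntegralReal (2/5) (1/5) (by norm_num) (by norm_num)
    rw [Complex.betaIntegral, intervalIntegral.integral_of_le zero_le_one,
      integral_Ioc_eq_integral_Ioo, setIntegral_congr_fun measurableSet_Ioo hcongr,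
      integral_complex_ofReal, Complex.ofReal_re, ProbabilityTheory.beta] at h
    rw [← h, mul_comm, add_comm]

lemma aux_image : (fun x : ℝ => x⁻¹) '' Set.Ioo 0 1 = Set.Ioi 1 := by
  ext t
  constructor
  · rintro ⟨x, hx, rfl⟩
    exact (one_lt_inv₀ hx.1).2 hx.2
  · intro ht
    have ht' : (1 : ℝ) < t := ht
    exact ⟨t⁻¹, ⟨by positivity, inv_lt_one_of_one_lt₀ ht'⟩, inv_inv t⟩

lemma aux_congr : ∀ x ∈ Set.Ioo (0 : ℝ) 1,
    |-(x ^ 2)⁻¹| • ((x⁻¹) ^ (-(3 : ℝ) / 5) * (x⁻¹ - 1) ^ (-(4 : ℝ) / 5))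
      = x ^ (-(3 : ℝ) / 5) * (1 - x) ^ (-(4 : ℝ) / 5) := by
  intro x hx
  have h0 := hx.1
  have h1 : 0 < 1 - x := by linarith [hx.2]
  have e : x⁻¹ - 1 = (1 - x) * x⁻¹ := by field_simp
  have e2 : (x ^ 2)⁻¹ = x ^ (-2 : ℝ) := by
    rw [Real.rpow_neg h0.le]; norm_num
  rw [abs_neg, abs_of_pos (by positivity), smul_eq_mul, e,
    Real.mul_rpow h1.le (by positivity), Real.inv_rpow h0.le, Real.inv_rpow h0.le,
    ← Real.rpow_neg h0.le, ← Real.rpow_neg h0.le, e2]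
  have e3 : x ^ (-(3 : ℝ) / 5) = x ^ (-2 : ℝ) * x ^ (-(-(3 : ℝ) / 5)) * x ^ (-(-(4 : ℝ) / 5)) := by
    rw [← Real.rpow_add h0, ← Real.rpow_add h0]; norm_num
  rw [e3]; ring

lemma aux_sin : Real.sin (Real.pi * (2 / 5)) = Real.sqrt (10 + 2 * Real.sqrt 5) / 4 := by
  have h5 : Real.sqrt 5 ^ 2 = 5 := Real.sq_sqrt (by norm_num)
  have hc : Real.cos (Real.pi * (2 / 5)) = (Real.sqrt 5 - 1) / 4 := by
    rw [show Real.pi * (2 / 5) = 2 * (Real.pi / 5) by ring, Real.cos_two_mul, Real.cos_pi_div_five]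
    linear_combination h5 / 8
  have hs : 0 ≤ Real.sin (Real.pi * (2 / 5)) :=
    Real.sin_nonneg_of_nonneg_of_le_pi (by positivity) (by linarith [Real.pi_pos])
  have hsq := Real.sin_sq_add_cos_sq (Real.pi * (2 / 5))
  rw [hc] at hsq
  have : Real.sqrt (10 + 2 * Real.sqrt 5) = 4 * Real.sin (Real.pi * (2 / 5)) := by
    rw [Real.sqrt_eq_iff_mul_self_eq (by positivity) (by positivity)]
    linear_combination h5 - 16 * hsq
  rw [this]; ring

/-- the improper integral `(1/5)·∫₁^∞ t^{-3/5}(t-1)^{-4/5} dt` converges and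
equals `(1/5)·B(1/5, 2/5) = Γ(1/5)·Γ(2/5)²·√(10+2√5)/(20π)`, where
`B(a,b) = Γ(a)Γ(b)/Γ(a+b)` is the Euler Beta function. -/
theorem alpha_at_one :
    IntegrableOn (fun t : ℝ => t ^ (-(3 : ℝ) / 5) * (t - 1) ^ (-(4 : ℝ) / 5)) (Set.Ioi 1) ∧
    (1 / 5) * ∫ t in Set.Ioi (1 : ℝ), t ^ (-(3 : ℝ) / 5) * (t - 1) ^ (-(4 : ℝ) / 5)
      = (1 / 5) * (Real.Gamma (1 / 5) * Real.Gamma (2 / 5) / Real.Gamma (1 / 5 + 2 / 5)) ∧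
    (1 / 5) * (Real.Gamma (1 / 5) * Real.Gamma (2 / 5) / Real.Gamma (1 / 5 + 2 / 5))
      = Real.Gamma (1 / 5) * Real.Gamma (2 / 5) ^ 2 *
          Real.sqrt (10 + 2 * Real.sqrt 5) / (20 * Real.pi) := by
  have hd : ∀ x ∈ Set.Ioo (0 : ℝ) 1,
      HasDerivWithinAt (fun x : ℝ => x⁻¹) (-(x ^ 2)⁻¹) (Set.Ioo 0 1) x :=
    fun x hx => (hasDerivAt_inv hx.1.ne').hasDerivWithinAt
  have hi : Set.InjOn (fun x : ℝ => x⁻¹) (Set.Ioo 0 1) := inv_injective.injOn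
  refine ⟨?_, ?_, ?_⟩
  · rw [← aux_image, integrableOn_image_iff_integrableOn_abs_deriv_smul measurableSet_Ioo hd hi]
    exact aux_beta.1.congr_fun (fun x hx => (aux_congr x hx).symm) measurableSet_Ioo
  · rw [← aux_image, integral_image_eq_integral_abs_deriv_smul measurableSet_Ioo hd hi,
      setIntegral_congr_fun measurableSet_Ioo aux_congr, aux_beta.2]
  · have hr := Real.Gamma_mul_Gamma_one_sub (2 / 5)
    rw [aux_sin, show (1 : ℝ) - 2 / 5 = 3 / 5 by norm_num] at hr
    rw [show (1 : ℝ) / 5 + 2 / 5 = 3 / 5 by norm_num]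
    have h3 : Real.Gamma (3 / 5) ≠ 0 := (Real.Gamma_pos_of_pos (by norm_num)).ne'
    have hS : Real.sqrt (10 + 2 * Real.sqrt 5) ≠ 0 := by positivity
    have hp := Real.pi_ne_zero
    generalize Real.sqrt (10 + 2 * Real.sqrt 5) = S at *
    field_simp at hr ⊢
    linear_combination (-5) * hr
end

section
/- Let u(x,y) = x·y·e^{y}·(x³ + y³ − x³e^{3y})^{−1/3} and v(x,y) = y, defined for real x, y with y ≠ 0 and x³ + y³ − x³e^{3y} > 0 (real cube root of a positive real). Then (u,v) satisfies the projective flow PDE for the vector field ϖ(x,y) = x⁴/y² + xy, ϱ(x,y) = 0: that is, u_x·(x⁴/y² + xy − x) + u_y·(0 − y) = −u at every such point, and trivially v_x·(ϖ−x) + v_y·(ϱ−y) = −v. -/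
/-- The first coordinate of the abelian type II flow `q(𝐱)`:
`u(x,y) = xy·e^y·(x³+y³-x³e^{3y})^{-1/3}`. -/
noncomputable def uII (x y : ℝ) : ℝ :=
  x * y * Real.exp y * (x ^ 3 + y ^ 3 - x ^ 3 * Real.exp (3 * y)) ^ (-(1 : ℝ) / 3)

/-- `(u, v) = (xy·e^y·(x³+y³-x³e^{3y})^{-1/3}, y)` satisfies the projective flow
PDE for the vector field `ϖ(x,y) = x⁴/y² + xy`, `ϱ(x,y) = 0`. -/
theorem typeII_flow_satisfies_PDE (x y : ℝ) (hy : y ≠ 0)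
    (hpos : x ^ 3 + y ^ 3 - x ^ 3 * Real.exp (3 * y) > 0) :
    deriv (fun t => uII t y) x * (x ^ 4 / y ^ 2 + x * y - x) +
      deriv (fun t => uII x t) y * (0 - y) = -uII x y ∧
    deriv (fun t => (fun _ s => s) t y : ℝ → ℝ) x * (x ^ 4 / y ^ 2 + x * y - x) +
      deriv (fun t => (fun _ s => s) x t : ℝ → ℝ) y * (0 - y) = -y := by
  refine ⟨?_, by simp⟩
  have hD := hpos.ne'
  have h1 : HasDerivAt (fun t => uII t y) _ x :=
    (((hasDerivAt_id' x).mul_const y).mul_const (Real.exp y)).mul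
      ((((hasDerivAt_pow 3 x).add_const (y ^ 3)).sub
        ((hasDerivAt_pow 3 x).mul_const (Real.exp (3 * y)))).rpow_const
          (p := -(1 : ℝ) / 3) (Or.inl hD))
  have h2 : HasDerivAt (fun t => uII x t) _ y :=
    (((hasDerivAt_id' y).const_mul x).mul (Real.hasDerivAt_exp y)).mul
      ((((hasDerivAt_pow 3 y).const_add (x ^ 3)).sub
        ((((hasDerivAt_id' y).const_mul 3).exp).const_mul (x ^ 3))).rpow_const
          (p := -(1 : ℝ) / 3) (Or.inl hD))
  rw [h1.deriv, h2.deriv]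
  simp only [uII, Pi.add_apply, Pi.sub_apply, Pi.mul_apply]
  rw [Real.rpow_sub_one hD]
  generalize (x ^ 3 + y ^ 3 - x ^ 3 * Real.exp (3 * y)) ^ (-(1 : ℝ) / 3) = P
  generalize Real.exp (3 * y) = E at *
  generalize Real.exp y = F
  norm_num
  field_simp
  ring
end

section
/- Let u(x,y) = x·(y+1)^{√2} and v(x,y) = y/(y+1), defined for real x and real y > −1 (real power of a positive real). Then (u,v) satisfies the projective flow PDE for the vector field ϖ(x,y) = √2·xy, ϱ(x,y) = −y²: that is, u_x·(√2·xy − x) + u_y·(−y² − y) = −u and v_x·(√2·xy − x) + v_y·(−y² − y) = −v at every such point. -/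
/-- `(u,v) = (x(y+1)^{√2}, y/(y+1))` satisfies the projective flow PDE for the
non-integral vector field `ϖ(x,y) = √2·xy`, `ϱ(x,y) = -y²`, for `y > -1`. -/
theorem sqrt2_flow_satisfies_PDE (x y : ℝ) (hy : y > -1) :
    deriv (fun t => t * (y + 1) ^ (Real.sqrt 2)) x * (Real.sqrt 2 * x * y - x) +
      deriv (fun t => x * (t + 1) ^ (Real.sqrt 2)) y * (-y ^ 2 - y)
      = -(x * (y + 1) ^ (Real.sqrt 2)) ∧
    deriv (fun _ => y / (y + 1) : ℝ → ℝ) x * (Real.sqrt 2 * x * y - x) +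
      deriv (fun t => t / (t + 1)) y * (-y ^ 2 - y) = -(y / (y + 1)) := by
  have h0 : 0 < y + 1 := by linarith
  have hne : y + 1 ≠ 0 := h0.ne'
  have hadd : HasDerivAt (fun t : ℝ => t + 1) 1 y := (hasDerivAt_id y).add_const 1
  have h1 : HasDerivAt (fun t : ℝ => t * (y + 1) ^ (Real.sqrt 2))
      (1 * (y + 1) ^ (Real.sqrt 2)) x := (hasDerivAt_id x).mul_const _
  have h2 : HasDerivAt (fun t : ℝ => x * (t + 1) ^ (Real.sqrt 2))
      (x * (1 * Real.sqrt 2 * (y + 1) ^ (Real.sqrt 2 - 1))) y :=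
    (hadd.rpow_const (Or.inl hne)).const_mul x
  have h3 : HasDerivAt (fun t : ℝ => t / (t + 1))
      ((1 * (y + 1) - y * 1) / (y + 1) ^ 2) y := (hasDerivAt_id y).div hadd hne
  constructor
  · rw [h1.deriv, h2.deriv, Real.rpow_sub_one hne]
    field_simp
    ring
  · rw [h3.deriv, deriv_const]
    field_simp
    ring
end

section
/- Define Z(x) = −√(2e)·exp(x + x²/2)·∫₀^{(x+1)/√2} e^{−t²} dt for real x, where e = exp(1). Then Z(−1) = 0, Z is differentiable on ℝ, and for every real x, Z'(x) = (x+1)·Z(x) − 1; equivalently, Z solves Z(x)·ϱ(x,1) + Z'(x)·(x·ϱ(x,1) − ϖ(x,1)) = 1 for ϖ(x,y) = x² + xy + y², ϱ(x,y) = xy + y². -/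
/-- `Z(x) = -√(2e)·exp(x + x²/2)·∫₀^{(x+1)/√2} e^{-t²} dt
  = -√(πe/2)·exp(x + x²/2)·erf((x+1)/√2)`. -/
noncomputable def Zfun (x : ℝ) : ℝ :=
  -Real.sqrt (2 * Real.exp 1) * Real.exp (x + x ^ 2 / 2) *
    ∫ t in (0 : ℝ)..((x + 1) / Real.sqrt 2), Real.exp (-t ^ 2)

theorem Zfun_hasDerivAt (x : ℝ) : HasDerivAt Zfun ((x + 1) * Zfun x - 1) x := by
  have hc : Continuous fun t : ℝ => Real.exp (-t ^ 2) := by fun_prop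
  have h1 : HasDerivAt (fun y : ℝ => (y + 1) / Real.sqrt 2) (1 / Real.sqrt 2) x :=
    ((hasDerivAt_id x).add_const 1).div_const _
  have h2 : HasDerivAt (fun u : ℝ => ∫ t in (0 : ℝ)..u, Real.exp (-t ^ 2))
      (Real.exp (-((x + 1) / Real.sqrt 2) ^ 2)) ((x + 1) / Real.sqrt 2) :=
    hc.integral_hasStrictDerivAt 0 _ |>.hasDerivAt
  have h3 := h2.comp x h1
  have h4 : HasDerivAt (fun y : ℝ => y + y ^ 2 / 2) (1 + x) x := by
    have := (hasDerivAt_id x).add (((hasDerivAt_id x).pow 2).div_const 2)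
    refine HasDerivAt.congr_deriv (f := fun y : ℝ => y + y ^ 2 / 2) this ?_
    simp
  have h5 := (h4.exp.const_mul (-Real.sqrt (2 * Real.exp 1))).mul h3
  have hs : Real.sqrt 2 ≠ 0 := by positivity
  have h2e : Real.sqrt (2 * Real.exp 1) = Real.sqrt 2 * Real.exp (1 / 2) := by
    rw [Real.sqrt_mul (by norm_num), Real.exp_half]
  have key : Real.exp (1 / 2) * Real.exp (x + x ^ 2 / 2) *
      Real.exp (-((x + 1) / Real.sqrt 2) ^ 2) = 1 := by
    rw [← Real.exp_add, ← Real.exp_add, div_pow, Real.sq_sqrt (by norm_num), Real.exp_eq_one_iff]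
    ring
  have key2 : -Real.sqrt (2 * Real.exp 1) * Real.exp (x + x ^ 2 / 2) *
      (Real.exp (-((x + 1) / Real.sqrt 2) ^ 2) * (1 / Real.sqrt 2)) = -1 := by
    rw [h2e]
    calc _ = -(Real.exp (1 / 2) * Real.exp (x + x ^ 2 / 2) *
      Real.exp (-((x + 1) / Real.sqrt 2) ^ 2)) * (Real.sqrt 2 / Real.sqrt 2) := by ring
      _ = -1 := by rw [key, div_self hs]; norm_num
  refine HasDerivAt.congr_deriv (f := Zfun) h5 ?_
  rw [key2]
  simp only [Function.comp, Zfun]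
  ring

/-- `Z(-1) = 0`, `Z` is differentiable, `Z'(x) = (x+1)·Z(x) - 1`; equivalently,
`Z` solves the reduction equation `Z·ϱ(x,1) + Z'·(x·ϱ(x,1) - ϖ(x,1)) = 1` for
`ϖ(x,y) = x² + xy + y²`, `ϱ(x,y) = xy + y²`. -/
theorem Zfun_ODE :
    Zfun (-1) = 0 ∧ Differentiable ℝ Zfun ∧
    (∀ x : ℝ, deriv Zfun x = (x + 1) * Zfun x - 1) ∧
    (∀ x : ℝ, Zfun x * (x * 1 + 1 ^ 2) +
      deriv Zfun x * (x * (x * 1 + 1 ^ 2) - (x ^ 2 + x * 1 + 1 ^ 2)) = 1) := by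
  refine ⟨by simp [Zfun], fun x => (Zfun_hasDerivAt x).differentiableAt,
    fun x => (Zfun_hasDerivAt x).deriv, fun x => ?_⟩
  rw [(Zfun_hasDerivAt x).deriv]
  ring
end

section
/- Let δ, γ be real (or complex) numbers with γ² ≠ δ², and define p = −(δ+γ)/2 and q = 4√3/(3(γ² − δ²)). Then p³·q²·(3p − 2q) = 1 if and only if δ·γ·(δ − γ) = 4√3/9. In other words, the birational transformation (δ,γ) ↦ (p,q) transforms the cubic curve δγ(δ−γ) = 4√3/9 into the elliptic curve p³q²(3p−2q) = 1. -/
/-- the birational transformation `p = -(δ+γ)/2`, `q = 4√3/(3(γ²-δ²))`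
transforms the cubic curve `δγ(δ-γ) = 4√3/9` into the elliptic curve `p³q²(3p-2q) = 1`. -/
theorem birational_transform_of_cubic (δ γ : ℝ) (h : γ ^ 2 ≠ δ ^ 2) :
    (-(δ + γ) / 2) ^ 3 * (4 * Real.sqrt 3 / (3 * (γ ^ 2 - δ ^ 2))) ^ 2 *
        (3 * (-(δ + γ) / 2) - 2 * (4 * Real.sqrt 3 / (3 * (γ ^ 2 - δ ^ 2)))) = 1
      ↔ δ * γ * (δ - γ) = 4 * Real.sqrt 3 / 9 := by
  have hs : Real.sqrt 3 ^ 2 = 3 := Real.sq_sqrt (by norm_num)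
  have ha : δ + γ ≠ 0 := fun h0 => h (by linear_combination (γ - δ) * h0)
  have hb : γ - δ ≠ 0 := fun h0 => h (by linear_combination (γ + δ) * h0)
  have hf : γ ^ 2 - δ ^ 2 = (δ + γ) * (γ - δ) := by ring
  generalize Real.sqrt 3 = s at *
  have key : (-(δ + γ) / 2) ^ 3 * (4 * s / (3 * (γ ^ 2 - δ ^ 2))) ^ 2 *
        (3 * (-(δ + γ) / 2) - 2 * (4 * s / (3 * (γ ^ 2 - δ ^ 2)))) - 1
      = (4 / (γ - δ) ^ 3) * (4 * s / 9 - δ * γ * (δ - γ)) := by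
    have hq : (4 * s / (3 * (γ ^ 2 - δ ^ 2))) ^ 2 = 16 / (3 * ((δ + γ) * (γ - δ)) ^ 2) := by
      rw [hf, div_pow, mul_pow, hs]
      field_simp
      norm_num
    rw [hq, hf]
    field_simp
    ring
  have hc : 4 / (γ - δ) ^ 3 ≠ 0 := div_ne_zero (by norm_num) (pow_ne_zero 3 hb)
  rw [← sub_eq_zero, key, mul_eq_zero, or_iff_right hc, sub_eq_zero, eq_comm]
end

section
/- Let u(x,y) = y/(2y+2) + (2xy − y²)/(2√(4xy(x−y)(y+2) + y²(y+1)²)), defined for real x, y with y ≠ 0, y ≠ −1 and 4xy(x−y)(y+2) + y²(y+1)² > 0. Then u satisfies the projective flow PDE for the vector field ϖ(x,y) = (−4x³ + 6x²y − 3xy²)/y, ϱ(x,y) = −y²: that is, u_x·((−4x³ + 6x²y − 3xy²)/y − x) + u_y·(−y² − y) = −u at every such point; moreover v(x,y) = y/(y+1) satisfies the same PDE. -/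
/-- The function `u(x,y) = y/(2y+2) + (2xy - y²)/(2√(4xy(x-y)(y+2) + y²(y+1)²))`. -/
noncomputable def uConj (x y : ℝ) : ℝ :=
  y / (2 * y + 2) +
    (2 * x * y - y ^ 2) /
      (2 * Real.sqrt (4 * x * y * (x - y) * (y + 2) + y ^ 2 * (y + 1) ^ 2))

/-- `u` satisfies the projective flow PDE for the vector field
`ϖ(x,y) = (-4x³ + 6x²y - 3xy²)/y`, `ϱ(x,y) = -y²`; moreover `v(x,y) = y/(y+1)` satisfies
the same PDE. -/
theorem conjugated_flow_satisfies_PDE (x y : ℝ) (hy : y ≠ 0) (hy1 : y ≠ -1)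
    (hpos : 4 * x * y * (x - y) * (y + 2) + y ^ 2 * (y + 1) ^ 2 > 0) :
    deriv (fun t => uConj t y) x *
        ((-4 * x ^ 3 + 6 * x ^ 2 * y - 3 * x * y ^ 2) / y - x) +
      deriv (fun t => uConj x t) y * (-y ^ 2 - y) = -uConj x y ∧
    deriv (fun _ => y / (y + 1) : ℝ → ℝ) x *
        ((-4 * x ^ 3 + 6 * x ^ 2 * y - 3 * x * y ^ 2) / y - x) +
      deriv (fun t => t / (t + 1)) y * (-y ^ 2 - y) = -(y / (y + 1)) := by
  have hy1' : y + 1 ≠ 0 := fun h => hy1 (by linarith)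
  have hy2 : 2 * y + 2 ≠ 0 := fun h => hy1 (by linarith)
  refine ⟨?_, ?_⟩
  · obtain ⟨s, hs⟩ : ∃ s, s = Real.sqrt (4 * x * y * (x - y) * (y + 2) + y ^ 2 * (y + 1) ^ 2) :=
      ⟨_, rfl⟩
    have hs0 : 0 < s := hs ▸ Real.sqrt_pos.2 hpos
    have hss : s ^ 2 = 4 * x * y * (x - y) * (y + 2) + y ^ 2 * (y + 1) ^ 2 := by
      rw [hs]; exact Real.sq_sqrt hpos.le
    have hsne : (2 * s) ≠ 0 := by positivity
    -- derivative in the first variable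
    have hDx : HasDerivAt (fun t : ℝ => 4 * t * y * (t - y) * (y + 2) + y ^ 2 * (y + 1) ^ 2)
        (4 * y * (y + 2) * (2 * x - y)) x := by
      have h := ((((((hasDerivAt_id x).const_mul 4).mul_const y).mul
        ((hasDerivAt_id x).sub_const y)).mul_const (y + 2)).add_const (y ^ 2 * (y + 1) ^ 2))
      refine h.congr_deriv ?_
      simp only [id]
      ring
    have hNx : HasDerivAt (fun t : ℝ => 2 * t * y - y ^ 2) (2 * y) x := by
      have h := (((hasDerivAt_id x).const_mul 2).mul_const y).sub_const (y ^ 2)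
      refine h.congr_deriv ?_
      ring
    have hDy : HasDerivAt (fun t : ℝ => 4 * x * t * (x - t) * (t + 2) + t ^ 2 * (t + 1) ^ 2)
        (4 * x * (x - y) * (y + 2) - 4 * x * y * (y + 2) + 4 * x * y * (x - y)
          + 2 * y * (y + 1) ^ 2 + 2 * y ^ 2 * (y + 1)) y := by
      have h := (((((hasDerivAt_id y).const_mul (4 * x)).mul
        ((hasDerivAt_id y).const_sub x)).mul ((hasDerivAt_id y).add_const 2)).add
        (((hasDerivAt_id y).pow 2).mul (((hasDerivAt_id y).add_const 1).pow 2)))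
      refine h.congr_deriv ?_
      simp
      ring
    have hNy : HasDerivAt (fun t : ℝ => 2 * x * t - t ^ 2) (2 * x - 2 * y) y := by
      have h := ((hasDerivAt_id y).const_mul (2 * x)).sub ((hasDerivAt_id y).pow 2)
      refine h.congr_deriv ?_
      simp
    have hAy : HasDerivAt (fun t : ℝ => t / (2 * t + 2)) (1 / (2 * (y + 1) ^ 2)) y := by
      have h := (hasDerivAt_id y).div (((hasDerivAt_id y).const_mul 2).add_const 2) hy2
      refine h.congr_deriv ?_
      simp only [id]
      field_simp
      ring
    have hux := ((hNx.div ((hDx.sqrt hpos.ne').const_mul 2) (by rw [← hs]; exact hsne)).const_add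
      (y / (2 * y + 2))).deriv
    have huy := (hAy.add
      (hNy.div ((hDy.sqrt hpos.ne').const_mul 2) (by rw [← hs]; exact hsne))).deriv
    rw [← hs] at hux huy
    have e1 : deriv (fun t => uConj t y) x = _ := hux
    have e2 : deriv (fun t => uConj x t) y = _ := huy
    rw [e1, e2, uConj, ← hs]
    have hs1 : s ≠ 0 := hs0.ne'
    have key : ∀ P Q Nx Ny Dx Dy N : ℝ,
        2 * s ^ 2 * (Nx * P + Ny * Q + N) = N * (Dx * P + Dy * Q) →
        ((Nx * (2 * s) - N * (2 * (Dx / (2 * s)))) / (2 * s) ^ 2) * P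
          + ((Ny * (2 * s) - N * (2 * (Dy / (2 * s)))) / (2 * s) ^ 2) * Q = - (N / (2 * s)) := by
      intro P Q Nx Ny Dx Dy N h
      field_simp
      linear_combination h
    have hA : 1 / (2 * (y + 1) ^ 2) * (-y ^ 2 - y) = -(y / (2 * y + 2)) := by
      field_simp
      ring
    rw [add_mul, hA]
    have := key ((-4 * x ^ 3 + 6 * x ^ 2 * y - 3 * x * y ^ 2) / y - x) (-y ^ 2 - y) _ _ _ _
      (2 * x * y - y ^ 2) (by
        rw [hss]
        show 2 * _ * ((2 * y) * _ + (2 * x - 2 * y) * _ + _) = _ * ((4 * y * (y + 2) * (2 * x - y)) * _ + (4 * x * (x - y) * (y + 2) - 4 * x * y * (y + 2) + 4 * x * y * (x - y)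
          + 2 * y * (y + 1) ^ 2 + 2 * y ^ 2 * (y + 1)) * _)
        field_simp
        ring)
    linear_combination this
  · have h : HasDerivAt (fun t : ℝ => t / (t + 1)) (1 / (y + 1) ^ 2) y := by
      have h := (hasDerivAt_id y).div ((hasDerivAt_id y).add_const 1) hy1'
      refine h.congr_deriv ?_
      simp
    rw [h.deriv, deriv_const]
    field_simp
    ring
end
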